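/- Let d ≥ 1 and let ψ, g : ℝ^d → ℝ be continuous, integrable, even functions whose Fourier transforms 𝓕ψ and 𝓕g are integrable, real-valued, and strictly positive everywhere, and set ψ̃ = g ⋆ ψ. For pairwise distinct points q_1, …, q_N ∈ ℝ^d define B_{ij} = ψ(q_i − q_j) and B̃_{ij} = ψ̃(q_i − q_j). Then B and B̃ are symmetric positive definite, B is invertible, and the matrix S = B̃ B^{−1} has all eigenvalues real and strictly positive (S is similar to a symmetric positive definite matrix). -/

import Mathlib

open MeasureTheory Matrix
open scoped FourierTransform

/-!
The quadratic form of the matrix `(f (q i - q j))ᵢⱼ` at `c` is `∫ ‖E ξ‖² 𝓕 f ξ dξ`, where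
`E ξ = ∑ i, c i * exp (-2πi⟪ξ, q i⟫)`. As `E` is real-analytic and distinct characters are
linearly independent, `E` vanishes on no nonempty open set unless `c = 0`, so the form is positive
definite as soon as `𝓕 f` is nonnegative and not identically zero. This applies to `ψ` and to
`g ⋆ ψ`, whose transform is `𝓕 g * 𝓕 ψ`. Writing `B = Rᵀ R`, the matrix `B̃ B⁻¹` is conjugate under
`Rᵀ` to the positive definite matrix `R⁻ᵀ B̃ R⁻¹`, and an eigenvector `B w` of `B̃ B⁻¹` for `μ`
satisfies `w* B̃ w = μ w* B w`, which forces `μ > 0`.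
-/

section PositiveDefiniteMatrices

open scoped ComplexOrder

variable {ι 𝕜 : Type*} [Fintype ι] [RCLike 𝕜] {A B S : Matrix ι ι 𝕜}

theorem eigenvalue_pos_of_mul_posDef_eq_posDef (hA : A.PosDef) (hB : B.PosDef) (hS : S * B = A)
    {μ : 𝕜} {v : ι → 𝕜} (hv : v ≠ 0) (hSv : S *ᵥ v = μ • v) : 0 < μ := by
  classical
  obtain ⟨w, rfl⟩ : ∃ w, B *ᵥ w = v := mulVec_surjective_iff_isUnit.mpr hB.isUnit v
  have hw : w ≠ 0 := by
    rintro rfl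
    exact hv (mulVec_zero B)
  have hquad : star w ⬝ᵥ A *ᵥ w = μ * (star w ⬝ᵥ B *ᵥ w) := by
    rw [← hS, ← mulVec_mulVec, hSv, dotProduct_smul, smul_eq_mul]
  exact pos_of_mul_pos_left (hquad ▸ hA.dotProduct_mulVec_pos hw) (hB.dotProduct_mulVec_pos hw).le

variable [DecidableEq ι]

open scoped MatrixOrder in
theorem exists_isUnit_eq_conjTranspose_mul_self_of_posDef (hA : A.PosDef) :
    ∃ R : Matrix ι ι 𝕜, IsUnit R ∧ A = Rᴴ * R :=
  CStarAlgebra.isStrictlyPositive_iff_eq_star_mul_self.mp hA.isStrictlyPositive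

theorem posDef_map_ofReal_iff {ι : Type*} [Finite ι] {A : Matrix ι ι ℝ} :
    (A.map ((↑) : ℝ → ℂ)).PosDef ↔ A.PosDef := by
  classical
  cases nonempty_fintype ι
  refine ⟨fun hA => .of_dotProduct_mulVec_pos ?_ fun {c} hc => ?_, fun hA => ?_⟩
  · ext i j
    simpa using hA.isHermitian.apply i j
  · have hc' : (fun i => (c i : ℂ)) ≠ 0 := fun h => hc (funext fun i => by simpa using congrFun h i)
    have := hA.dotProduct_mulVec_pos hc'
    simpa [dotProduct, mulVec, ← Complex.ofReal_mul, ← Complex.ofReal_sum] using this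
  · obtain ⟨R, hR, rfl⟩ := exists_isUnit_eq_conjTranspose_mul_self_of_posDef hA
    have hRc : IsUnit (R.map ((↑) : ℝ → ℂ)) := hR.map Complex.ofRealHom.mapMatrix
    have hfactor : (Rᴴ * R).map ((↑) : ℝ → ℂ) = (R.map (↑))ᴴ * R.map (↑) := by
      ext i j
      simp [mul_apply]
    rw [hfactor]
    exact .conjTranspose_mul_self _ (mulVec_injective_of_isUnit hRc)

theorem exists_posDef_mul_inv_eq_conj (hA : A.PosDef) (hB : B.PosDef) :
    ∃ C P : Matrix ι ι 𝕜, C.PosDef ∧ IsUnit P.det ∧ A * B⁻¹ = P * C * P⁻¹ := by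
  obtain ⟨R, hR, rfl⟩ := exists_isUnit_eq_conjTranspose_mul_self_of_posDef hB
  have hRdet : IsUnit Rᴴ.det := (isUnit_iff_isUnit_det _).mp hR.star
  refine ⟨R⁻¹ᴴ * A * R⁻¹, Rᴴ, ?_, hRdet, ?_⟩
  · exact hA.conjTranspose_mul_mul_same (mulVec_injective_of_isUnit (isUnit_nonsing_inv_iff.mpr hR))
  · rw [Matrix.mul_inv_rev, conjTranspose_nonsing_inv, mul_assoc Rᴴ⁻¹,
      mul_nonsing_inv_cancel_left _ _ hRdet, mul_assoc]

theorem eigenvalue_mul_inv_real_pos {A B : Matrix ι ι ℝ} (hA : A.PosDef) (hB : B.PosDef)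
    {μ : ℂ} {v : ι → ℂ} (hv : v ≠ 0) (hμ : (A * B⁻¹).map ((↑) : ℝ → ℂ) *ᵥ v = μ • v) :
    μ.im = 0 ∧ 0 < μ.re := by
  have hcancel : (A * B⁻¹).map ((↑) : ℝ → ℂ) * B.map (↑) = A.map (↑) := by
    refine (Matrix.map_mul (f := Complex.ofRealHom)).symm.trans ?_
    rw [nonsing_inv_mul_cancel_right _ _ ((isUnit_iff_isUnit_det B).mp hB.isUnit)]
    rfl
  have hμ_pos : 0 < μ := eigenvalue_pos_of_mul_posDef_eq_posDef (posDef_map_ofReal_iff.mpr hA)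
    (posDef_map_ofReal_iff.mpr hB) hcancel hv hμ
  exact ⟨(Complex.pos_iff.mp hμ_pos).2.symm, (Complex.pos_iff.mp hμ_pos).1⟩

end PositiveDefiniteMatrices

section ExponentialSums

variable {ι V : Type*} [NormedAddCommGroup V] [InnerProductSpace ℝ V]

/-- The exponential sum `ξ ↦ ∑ i, c i * exp (-2πi⟪ξ, q i⟫)`, i.e. the Fourier transform of the
finite measure `∑ i, c i • δ_(q i)`. The squared modulus of this function weights the transform of
a kernel in the quadratic form of the kernel matrix at the nodes `q`. -/
noncomputable def exponentialSum (q : ι → V) (c : ι →₀ ℂ) (ξ : V) : ℂ :=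
  c.sum fun i a => a * 𝐞 (-inner ℝ ξ (q i))

theorem analyticOnNhd_exponentialSum (q : ι → V) (c : ι →₀ ℂ) :
    AnalyticOnNhd ℝ (exponentialSum q c) Set.univ := by
  have hphase (i : ι) : AnalyticOnNhd ℝ
      (fun ξ : V => ((2 * Real.pi * -inner ℝ ξ (q i) : ℝ) : ℂ) * Complex.I) Set.univ := fun ξ _ =>
    ((Complex.ofRealCLM.analyticAt _).comp
      (analyticAt_const.mul (((innerSL ℝ).flip (q i)).analyticAt ξ).neg)).mul analyticAt_const
  exact c.support.analyticOnNhd_fun_sum fun i _ ξ hξ =>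
    analyticAt_const.mul (analyticAt_cexp.restrictScalars.comp (hphase i ξ hξ))

theorem linearIndependent_fourierChar_inner :
    LinearIndependent ℂ fun x ξ : V => (𝐞 (inner ℝ ξ x) : ℂ) := by
  let χ (x : V) : Multiplicative V →* ℂ := Circle.coeHom.comp
    (Real.fourierChar.compAddMonoidHom ((innerₗ V).flip x).toAddMonoidHom).toMonoidHom
  have hχ : Function.Injective χ := fun x y hxy => by
    refine BoundedContinuousFunction.ext_of_char_eq (L := innerₗ V) Real.continuous_fourierChar
      Real.fourierChar_ne_one continuous_inner (fun v hv hv0 => ?_) fun ξ => ?_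
    · exact hv (inner_self_eq_zero.mp (DFunLike.congr_fun hv0 v))
    · have hξ : (𝐞 (inner ℝ ξ x) : ℂ) = 𝐞 (inner ℝ ξ y) :=
        DFunLike.congr_fun hxy (Multiplicative.ofAdd ξ)
      rwa [real_inner_comm, real_inner_comm y] at hξ
  exact (linearIndependent_monoidHom (Multiplicative V) ℂ).comp χ hχ

theorem exists_exponentialSum_ne_zero {q : ι → V} (hq : Function.Injective q) {c : ι →₀ ℂ}
    (hc : c ≠ 0) {U : Set V} {ξ₀ : V} (hU : U ∈ nhds ξ₀) : ∃ ξ ∈ U, exponentialSum q c ξ ≠ 0 := by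
  by_contra! hvanish
  have hzero : exponentialSum q c = 0 :=
    (analyticOnNhd_exponentialSum q c).eq_of_eventuallyEq analyticOnNhd_const
      (Filter.mem_of_superset hU hvanish)
  have hlin := linearIndependent_iff.mp
    (linearIndependent_fourierChar_inner.comp (fun i => -q i) (neg_injective.comp hq))
  refine hc (hlin c (funext fun ξ => ?_))
  simpa [exponentialSum, Finsupp.linearCombination_apply, Finsupp.sum] using congrFun hzero ξ

theorem normSq_exponentialSum (q : ι → V) (c : ι →₀ ℂ) (ξ : V) :
    (Complex.normSq (exponentialSum q c ξ) : ℂ) =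
      c.sum fun i a => c.sum fun j b => star a * 𝐞 (inner ℝ ξ (q i - q j)) * b := by
  rw [Complex.normSq_eq_conj_mul_self, exponentialSum, Finsupp.sum, map_sum, Finset.sum_mul_sum]
  refine Finset.sum_congr rfl fun i _ => Finset.sum_congr rfl fun j _ => ?_
  dsimp only
  rw [inner_sub_right, sub_eq_add_neg, AddChar.map_add_eq_mul, Circle.coe_mul, map_mul,
    ← Circle.coe_inv_eq_conj, ← AddChar.map_neg_eq_inv, neg_neg, Complex.star_def]
  ring

end ExponentialSums

section FourierTransform

variable {V : Type*} [NormedAddCommGroup V] [InnerProductSpace ℝ V] [FiniteDimensional ℝ V]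
  [MeasurableSpace V] [BorelSpace V] {f g : V → ℂ}

theorem exists_boundedContinuousFunction_eq_fourier (hf : Integrable f) :
    ∃ F : BoundedContinuousFunction V ℂ, F = 𝓕 f :=
  ⟨_, Real.fourierTransform_toLp (memLp_one_iff_integrable.mpr hf)⟩

theorem bddAbove_range_norm_of_integrable_fourier (hfc : Continuous f) (hf : Integrable f)
    (hFf : Integrable (𝓕 f)) : BddAbove (Set.range fun x => ‖f x‖) := by
  obtain ⟨F, hF⟩ := exists_boundedContinuousFunction_eq_fourier hFf
  refine ⟨‖F‖, ?_⟩
  rintro _ ⟨x, rfl⟩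
  dsimp only
  rw [← hfc.fourierInv_fourier_eq hf hFf, Real.fourierInv_eq_fourier_neg, ← hF]
  exact F.norm_coe_le_norm (-x)

theorem apply_neg_eq_star_of_isSelfAdjoint_fourier (hfc : Continuous f) (hf : Integrable f)
    (hFf : Integrable (𝓕 f)) (hFreal : ∀ ξ, IsSelfAdjoint (𝓕 f ξ)) (x : V) :
    f (-x) = star (f x) := by
  rw [← hfc.fourierInv_fourier_eq hf hFf, Real.fourierInv_eq, Real.fourierInv_eq, Complex.star_def,
    ← integral_conj]
  refine integral_congr_ae (.of_forall fun ξ => ?_)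
  have hconj : starRingEnd ℂ (𝓕 f ξ) = 𝓕 f ξ := hFreal ξ
  simp [Circle.smul_def, hconj, AddChar.map_neg_eq_inv, inner_neg_right]

section Convolution

open ContinuousLinearMap
open scoped Convolution

theorem continuous_convolution_of_integrable_fourier (hg : Integrable g) (hfc : Continuous f)
    (hf : Integrable f) (hFf : Integrable (𝓕 f)) : Continuous (g ⋆[mul ℂ ℂ] f) :=
  (bddAbove_range_norm_of_integrable_fourier hfc hf hFf).continuous_convolution_right_of_integrable
    _ hg hfc

theorem fourier_convolution_eq_mul (hg : Integrable g) (hf : Integrable f) :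
    𝓕 (g ⋆[mul ℂ ℂ] f) = 𝓕 g * 𝓕 f :=
  funext (Real.fourier_mul_convolution_eq hg hf)

theorem integrable_fourier_convolution (hg : Integrable g) (hf : Integrable f)
    (hFf : Integrable (𝓕 f)) : Integrable (𝓕 (g ⋆[mul ℂ ℂ] f)) := by
  obtain ⟨G, hG⟩ := exists_boundedContinuousFunction_eq_fourier hg
  rw [fourier_convolution_eq_mul hg hf, ← hG]
  exact hFf.bdd_mul G.continuous.aestronglyMeasurable (.of_forall G.norm_coe_le_norm)

end Convolution

end FourierTransform

section KernelMatrix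

open scoped ComplexOrder

/-- The interpolation matrix `(f (q i - q j))ᵢⱼ` of the translation-invariant kernel
`(x, y) ↦ f (x - y)` at the nodes `q`. -/
def kernelMatrix {ι V R : Type*} [Sub V] (f : V → R) (q : ι → V) : Matrix ι ι R :=
  of fun i j => f (q i - q j)

theorem isHermitian_kernelMatrix {ι V R : Type*} [AddGroup V] [Star R] {f : V → R}
    (hf : ∀ x, f (-x) = star (f x)) (q : ι → V) : (kernelMatrix f q).IsHermitian := by
  ext i j
  simp only [kernelMatrix, conjTranspose_apply, of_apply, ← hf, neg_sub]

variable {ι V : Type*} [NormedAddCommGroup V] [InnerProductSpace ℝ V] [FiniteDimensional ℝ V]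
  [MeasurableSpace V] [BorelSpace V] {f g F : V → ℂ} {q : ι → V}

theorem integrable_fourierChar_inner_mul (hF : Integrable F) (x : V) :
    Integrable fun ξ => 𝐞 (inner ℝ ξ x) * F ξ := by
  simpa [Circle.smul_def] using (Real.fourierIntegral_convergent_iff (-x)).mpr hF

theorem integrable_star_mul_fourierChar_inner_mul (hF : Integrable F) (x : V) (a b : ℂ) :
    Integrable fun ξ => star a * 𝐞 (inner ℝ ξ x) * b * F ξ := by
  refine ((integrable_fourierChar_inner_mul hF x).const_mul (star a * b)).congr
    (.of_forall fun ξ => ?_)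
  ring

theorem integrable_normSq_exponentialSum_mul (hF : Integrable F) (q : ι → V) (c : ι →₀ ℂ) :
    Integrable fun ξ => Complex.normSq (exponentialSum q c ξ) * F ξ := by
  simp only [normSq_exponentialSum, Finsupp.sum, Finset.sum_mul]
  exact integrable_finsetSum _ fun i _ => integrable_finsetSum _ fun j _ =>
    integrable_star_mul_fourierChar_inner_mul hF _ _ _

theorem sum_star_mul_kernelMatrix_fourierInv_mul (hF : Integrable F) (q : ι → V) (c : ι →₀ ℂ) :
    (c.sum fun i a => c.sum fun j b => star a * kernelMatrix (𝓕⁻ F) q i j * b) =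
      ∫ ξ, Complex.normSq (exponentialSum q c ξ) * F ξ := by
  have hterm (i j : ι) : Integrable fun ξ =>
      star (c i) * 𝐞 (inner ℝ ξ (q i - q j)) * c j * F ξ :=
    integrable_star_mul_fourierChar_inner_mul hF _ _ _
  simp only [normSq_exponentialSum, Finsupp.sum, Finset.sum_mul]
  rw [integral_finsetSum _ fun i _ => integrable_finsetSum _ fun j _ => hterm i j]
  refine Finset.sum_congr rfl fun i _ => ?_
  rw [integral_finsetSum _ fun j _ => hterm i j]
  refine Finset.sum_congr rfl fun j _ => ?_
  rw [kernelMatrix, of_apply, Real.fourierInv_eq, ← integral_const_mul, ← integral_mul_const]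
  refine integral_congr_ae (.of_forall fun ξ => ?_)
  simp only [Circle.smul_def, smul_eq_mul]
  ring

theorem integral_normSq_exponentialSum_mul_pos {w : V → ℝ} (hw : Integrable w)
    (hwc : Continuous w) (hw_nonneg : 0 ≤ w) (hw_ne : w ≠ 0) (hq : Function.Injective q)
    {c : ι →₀ ℂ} (hc : c ≠ 0) : 0 < ∫ ξ, Complex.normSq (exponentialSum q c ξ) * w ξ := by
  obtain ⟨ξ₀, hξ₀⟩ := Function.ne_iff.mp hw_ne
  obtain ⟨ξ, hwξ, hEξ⟩ :=
    exists_exponentialSum_ne_zero hq hc (hwc.continuousAt.eventually_ne hξ₀)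
  have hE : Continuous (exponentialSum q c) :=
    continuousOn_univ.mp (analyticOnNhd_exponentialSum q c).continuousOn
  have hEw_int : Integrable fun ξ => Complex.normSq (exponentialSum q c ξ) * w ξ := by
    simpa using (integrable_normSq_exponentialSum_mul hw.ofReal q c).re
  exact integral_pos_of_integrable_nonneg_nonzero
    ((Complex.continuous_normSq.comp hE).mul hwc) hEw_int
    (fun ξ => mul_nonneg (Complex.normSq_nonneg _) (hw_nonneg ξ))
    (mul_ne_zero (Complex.normSq_eq_zero.not.mpr hEξ) hwξ)

theorem posDef_kernelMatrix (hfc : Continuous f) (hf : Integrable f) (hFf : Integrable (𝓕 f))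
    (hF_nonneg : 0 ≤ 𝓕 f) (hF_ne : 𝓕 f ≠ 0) (hq : Function.Injective q) :
    (kernelMatrix f q).PosDef := by
  have hf_neg := apply_neg_eq_star_of_isSelfAdjoint_fourier hfc hf hFf
    fun ξ => .of_nonneg (hF_nonneg ξ)
  refine ⟨isHermitian_kernelMatrix hf_neg q, fun c hc => ?_⟩
  let w (ξ : V) : ℝ := (𝓕 f ξ).re
  have hw (ξ : V) : 𝓕 f ξ = w ξ := Complex.eq_re_of_ofReal_le (hF_nonneg ξ)
  have hwc : Continuous w := by
    obtain ⟨F, hF⟩ := exists_boundedContinuousFunction_eq_fourier hf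
    exact Complex.continuous_re.comp (hF ▸ F.continuous)
  have hw_nonneg : 0 ≤ w := fun ξ => (Complex.le_def.mp (hF_nonneg ξ)).1
  have hw_ne : w ≠ 0 := fun h => hF_ne (funext fun ξ => by simp [hw, h])
  have hquad : (c.sum fun i a => c.sum fun j b => star a * kernelMatrix f q i j * b) =
      ((∫ ξ, Complex.normSq (exponentialSum q c ξ) * w ξ : ℝ) : ℂ) := by
    conv_lhs => rw [← hfc.fourierInv_fourier_eq hf hFf]
    rw [sum_star_mul_kernelMatrix_fourierInv_mul hFf, ← integral_complex_ofReal]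
    simp only [hw, Complex.ofReal_mul]
  rw [hquad, Complex.zero_lt_real]
  exact integral_normSq_exponentialSum_mul_pos hFf.re hwc hw_nonneg hw_ne hq hc

open ContinuousLinearMap in
open scoped Convolution in
theorem posDef_kernelMatrix_convolution (hg : Integrable g) (hfc : Continuous f)
    (hf : Integrable f) (hFf : Integrable (𝓕 f)) (hFg_nonneg : 0 ≤ 𝓕 g) (hFf_nonneg : 0 ≤ 𝓕 f)
    (hne : 𝓕 g * 𝓕 f ≠ 0) (hq : Function.Injective q) :
    (kernelMatrix (g ⋆[mul ℂ ℂ] f) q).PosDef := by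
  rw [← fourier_convolution_eq_mul hg hf] at hne
  refine posDef_kernelMatrix (continuous_convolution_of_integrable_fourier hg hfc hf hFf)
    (hg.integrable_convolution _ hf) (integrable_fourier_convolution hg hf hFf) ?_ hne hq
  rw [fourier_convolution_eq_mul hg hf]
  exact fun ξ => mul_nonneg (hFg_nonneg ξ) (hFf_nonneg ξ)

end KernelMatrix

section BlurringOperator

open ContinuousLinearMap
open scoped Convolution ComplexOrder

variable {ι V : Type*} [NormedAddCommGroup V] [InnerProductSpace ℝ V] [FiniteDimensional ℝ V]
  [MeasurableSpace V] [BorelSpace V]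

theorem convolution_ofReal (g ψ : V → ℝ) (x : V) :
    ((fun y => (g y : ℂ)) ⋆[mul ℂ ℂ] fun y => (ψ y : ℂ)) x = ((∫ y, g (x - y) * ψ y : ℝ) : ℂ) := by
  rw [convolution_eq_swap, ← integral_complex_ofReal]
  simp only [mul_apply', Complex.ofReal_mul]

theorem blurring_operator_posDef_general [Fintype ι] [DecidableEq ι] (ψ g : V → ℝ)
    (hψ_cont : Continuous ψ) (hψ_int : Integrable ψ) (hg_int : Integrable g)
    (hψFT_int : Integrable (𝓕 fun x => (ψ x : ℂ)))
    (hψFT_real : ∀ ξ, ((𝓕 fun x => (ψ x : ℂ)) ξ).im = 0)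
    (hψFT_nonneg : ∀ ξ, 0 ≤ ((𝓕 fun x => (ψ x : ℂ)) ξ).re)
    (hgFT_real : ∀ ξ, ((𝓕 fun x => (g x : ℂ)) ξ).im = 0)
    (hgFT_nonneg : ∀ ξ, 0 ≤ ((𝓕 fun x => (g x : ℂ)) ξ).re)
    (hFT_pos : ∃ ξ, 0 < ((𝓕 fun x => (ψ x : ℂ)) ξ).re ∧ 0 < ((𝓕 fun x => (g x : ℂ)) ξ).re)
    (ψt : V → ℝ) (hψt : ∀ x, ψt x = ∫ y, g (x - y) * ψ y)
    (q : ι → V) (hq : Function.Injective q) (B Bt : Matrix ι ι ℝ)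
    (hB : ∀ i j, B i j = ψ (q i - q j)) (hBt : ∀ i j, Bt i j = ψt (q i - q j)) :
    B.PosDef ∧ Bt.PosDef ∧ IsUnit B.det ∧
    (∃ C P : Matrix ι ι ℝ, C.PosDef ∧ IsUnit P.det ∧ Bt * B⁻¹ = P * C * P⁻¹) ∧
    ∀ (μ : ℂ) (v : ι → ℂ), v ≠ 0 →
      (Bt * B⁻¹).map (fun a => (a : ℂ)) *ᵥ v = μ • v → μ.im = 0 ∧ 0 < μ.re := by
  obtain rfl : B = kernelMatrix ψ q := ext hB
  obtain rfl : Bt = kernelMatrix ψt q := ext hBt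
  have hψt_conv : (fun x => (ψt x : ℂ)) = (fun x => (g x : ℂ)) ⋆[mul ℂ ℂ] fun x => (ψ x : ℂ) :=
    funext fun x => by rw [hψt, convolution_ofReal]
  have hFψ : 0 ≤ 𝓕 fun x => (ψ x : ℂ) := fun ξ =>
    Complex.nonneg_iff.mpr ⟨hψFT_nonneg ξ, (hψFT_real ξ).symm⟩
  have hFg : 0 ≤ 𝓕 fun x => (g x : ℂ) := fun ξ =>
    Complex.nonneg_iff.mpr ⟨hgFT_nonneg ξ, (hgFT_real ξ).symm⟩
  have hF_ne : (𝓕 fun x => (g x : ℂ)) * (𝓕 fun x => (ψ x : ℂ)) ≠ 0 := by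
    obtain ⟨ξ, hψξ, hgξ⟩ := hFT_pos
    exact Function.ne_iff.mpr ⟨ξ, mul_ne_zero (fun h => hgξ.ne' (by rw [h, Complex.zero_re]))
      fun h => hψξ.ne' (by rw [h, Complex.zero_re])⟩
  have hψ_cont' : Continuous fun x => (ψ x : ℂ) := Complex.continuous_ofReal.comp hψ_cont
  have hB_pos : (kernelMatrix ψ q).PosDef := posDef_map_ofReal_iff.mp <|
    posDef_kernelMatrix hψ_cont' hψ_int.ofReal hψFT_int hFψ (right_ne_zero_of_mul hF_ne) hq
  have hBt_pos : (kernelMatrix ψt q).PosDef := by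
    refine posDef_map_ofReal_iff.mp (?_ : (kernelMatrix (fun x => (ψt x : ℂ)) q).PosDef)
    rw [hψt_conv]
    exact posDef_kernelMatrix_convolution hg_int.ofReal hψ_cont' hψ_int.ofReal hψFT_int hFg hFψ
      hF_ne hq
  exact ⟨hB_pos, hBt_pos, (isUnit_iff_isUnit_det _).mp hB_pos.isUnit,
    exists_posDef_mul_inv_eq_conj hBt_pos hB_pos,
    fun _ _ => eigenvalue_mul_inv_real_pos hBt_pos hB_pos⟩

end BlurringOperator

/-- Theorem 2.1 of the paper: if the interpolation kernel `ψ` and the convolution kernel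
`g` each have strictly positive Fourier transform, then the interpolation matrix `B` and
the blurred interpolation matrix `B̃` (built from `ψ̃ = g ⋆ ψ`) are symmetric positive
definite, `B` is invertible, and `S = B̃ B⁻¹` has real, strictly positive eigenvalues
(being similar to a symmetric positive definite matrix). -/
theorem blurring_operator_posDef
    (d : ℕ) (hd : 1 ≤ d) (ψ g : EuclideanSpace ℝ (Fin d) → ℝ)
    (hψ_cont : Continuous ψ) (hψ_int : Integrable ψ) (hψ_even : ∀ x, ψ (-x) = ψ x)
    (hg_cont : Continuous g) (hg_int : Integrable g) (hg_even : ∀ x, g (-x) = g x)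
    (hψFT_int : Integrable (𝓕 fun x => (ψ x : ℂ)))
    (hψFT_real : ∀ ξ : EuclideanSpace ℝ (Fin d), ((𝓕 fun x => (ψ x : ℂ)) ξ).im = 0)
    (hψFT_pos : ∀ ξ : EuclideanSpace ℝ (Fin d), 0 < ((𝓕 fun x => (ψ x : ℂ)) ξ).re)
    (hgFT_int : Integrable (𝓕 fun x => (g x : ℂ)))
    (hgFT_real : ∀ ξ : EuclideanSpace ℝ (Fin d), ((𝓕 fun x => (g x : ℂ)) ξ).im = 0)
    (hgFT_pos : ∀ ξ : EuclideanSpace ℝ (Fin d), 0 < ((𝓕 fun x => (g x : ℂ)) ξ).re)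
    (ψt : EuclideanSpace ℝ (Fin d) → ℝ)
    (hψt : ∀ x, ψt x = ∫ y, g (x - y) * ψ y)
    (N : ℕ) (q : Fin N → EuclideanSpace ℝ (Fin d)) (hq : Function.Injective q)
    (B Bt : Matrix (Fin N) (Fin N) ℝ)
    (hB : ∀ i j, B i j = ψ (q i - q j))
    (hBt : ∀ i j, Bt i j = ψt (q i - q j)) :
    B.PosDef ∧ Bt.PosDef ∧ IsUnit B.det ∧
    (∃ C P : Matrix (Fin N) (Fin N) ℝ, C.PosDef ∧ IsUnit P.det ∧
      Bt * B⁻¹ = P * C * P⁻¹) ∧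
    ∀ (μ : ℂ) (v : Fin N → ℂ), v ≠ 0 →
      (Bt * B⁻¹).map (fun a => (a : ℂ)) *ᵥ v = μ • v → μ.im = 0 ∧ 0 < μ.re := by
  exact blurring_operator_posDef_general ψ g hψ_cont hψ_int hg_int hψFT_int hψFT_real
    (fun ξ => (hψFT_pos ξ).le) hgFT_real (fun ξ => (hgFT_pos ξ).le)
    ⟨0, hψFT_pos 0, hgFT_pos 0⟩ ψt hψt q hq B Bt hB hBt
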